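/- For every integer d ≥ 1 there exists a constant C_d > 0 such that for all n ≥ 2, the intersection graph G of any family of n nonempty axis-aligned boxes in ℝ^d admits a biclique cover of size at most C_d · n · (log₂ n)^d in which, moreover, every vertex of G belongs to A_i ∪ B_i for at most C_d · (log₂ n)^d indices i. -/

import Mathlib

/-!
An edge relation is covered by few bicliques as soon as every vertex `v` can be given small label
sets `X v` and `Y v` such that `u` is related to `v` iff `X u` meets `Y v`: each label `i` is the
biclique `{u | i ∈ X u} × {v | i ∈ Y v}`. Boxes meet iff all their projections meet, so tuples of
labels for the coordinate intervals label the boxes, and the bounds for the coordinates multiply.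

On the line, rank the `n` intervals by left endpoint. Two of them meet iff the later left endpoint
does not exceed the right endpoint of the earlier interval, i.e. iff the rank of one lies in an
integer interval attached to the other. Membership of an integer in an integer interval is labelled
by dyadic blocks, as in a segment tree: an integer lies in one block of each of the `O(log n)`
levels, and an integer interval is the union of at most two blocks per level.
-/

/-- A biclique cover of a simple graph `G`: a finite family of pairs of disjoint
vertex sets `(A i, B i)` such that every pair in `A i × B i` is an edge of `G`,
and every edge of `G` is covered by at least one biclique. -/
def IsBicliqueCover {V : Type*} (G : SimpleGraph V) {m : ℕ}
    (A B : Fin m → Finset V) : Prop :=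
  (∀ i, Disjoint (A i) (B i)) ∧
  (∀ i, ∀ a ∈ A i, ∀ b ∈ B i, G.Adj a b) ∧
  (∀ u v, G.Adj u v → ∃ i, (u ∈ A i ∧ v ∈ B i) ∨ (v ∈ A i ∧ u ∈ B i))

/-- A biclique partition: a biclique cover in which every edge is covered by
exactly one biclique. -/
def IsBicliquePartition {V : Type*} (G : SimpleGraph V) {m : ℕ}
    (A B : Fin m → Finset V) : Prop :=
  (∀ i, Disjoint (A i) (B i)) ∧
  (∀ i, ∀ a ∈ A i, ∀ b ∈ B i, G.Adj a b) ∧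
  (∀ u v, G.Adj u v → ∃! i, (u ∈ A i ∧ v ∈ B i) ∨ (v ∈ A i ∧ u ∈ B i))

/-- The size of a biclique cover: the sum of `|A i| + |B i|`. -/
def coverSize {V : Type*} {m : ℕ} (A B : Fin m → Finset V) : ℕ :=
  ∑ i, ((A i).card + (B i).card)

open Finset

/-- The relation `r` is a union of rectangles `A i ×ˢ B i` such that every `u : V` lies in at most
`K` of the `A i` and every `v : W` in at most `L` of the `B i`. The rectangles are encoded by their
incidences: `X u` is the set of all `i` with `u ∈ A i`, and `Y v` that of all `i` with `v ∈ B i`. -/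
def HasRectangleCover.{w} {V W : Type*} (r : V → W → Prop) (K L : ℕ) : Prop :=
  ∃ (ι : Type w) (X : V → Finset ι) (Y : W → Finset ι),
    (∀ u v, r u v ↔ ∃ i ∈ X u, i ∈ Y v) ∧ (∀ u, #(X u) ≤ K) ∧ ∀ v, #(Y v) ≤ L

namespace HasRectangleCover

universe w w'

variable {V W : Type*} {K L : ℕ}

theorem symmGen {r : V → V → Prop} (h : HasRectangleCover.{w} r K L) :
    HasRectangleCover.{w} (Relation.SymmGen r) (K + L) (K + L) := by
  obtain ⟨ι, X, Y, hr, hX, hY⟩ := h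
  refine ⟨ι ⊕ ι, fun v ↦ (X v).disjSum (Y v), fun v ↦ (Y v).disjSum (X v), fun u v ↦ ?_,
    fun v ↦ ?_, fun v ↦ ?_⟩
  · simp only [Relation.SymmGen, hr, Sum.exists, inl_mem_disjSum, inr_mem_disjSum,
      and_comm (a := _ ∈ X v)]
  · rw [card_disjSum]
    exact add_le_add (hX v) (hY v)
  · rw [card_disjSum, add_comm K]
    exact add_le_add (hY v) (hX v)

theorem forall_pi {J : Type w'} [Fintype J] {r : J → V → W → Prop}
    (h : ∀ j, HasRectangleCover.{w} (r j) K L) :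
    HasRectangleCover.{max w w'} (fun u v ↦ ∀ j, r j u v)
      (K ^ Fintype.card J) (L ^ Fintype.card J) := by
  classical
  choose ι X Y hr hX hY using h
  refine ⟨∀ j, ι j, fun u ↦ Fintype.piFinset (X · u), fun v ↦ Fintype.piFinset (Y · v),
    fun u v ↦ ?_, fun u ↦ ?_, fun v ↦ ?_⟩
  · simp only [hr, Classical.skolem, forall_and, Fintype.mem_piFinset]
  · rw [Fintype.card_piFinset]
    exact prod_le_pow_card _ _ _ fun j _ ↦ hX j u
  · rw [Fintype.card_piFinset]
    exact prod_le_pow_card _ _ _ fun j _ ↦ hY j v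

theorem exists_isBicliqueCover [Finite V] [DecidableEq V] {G : SimpleGraph V}
    (h : HasRectangleCover.{w} G.Adj K L) :
    ∃ (m : ℕ) (A B : Fin m → Finset V),
      IsBicliqueCover G A B ∧ ∀ v, #{i | v ∈ A i ∨ v ∈ B i} ≤ K + L := by
  classical
  have := Fintype.ofFinite V
  obtain ⟨ι, X, Y, hadj, hX, hY⟩ := h
  let S : Finset ι := univ.biUnion X
  let e : Fin #S ≃ S := S.equivFin.symm
  refine ⟨#S, fun i ↦ {v | ↑(e i) ∈ X v}, fun i ↦ {v | ↑(e i) ∈ Y v}, ⟨fun i ↦ ?_, ?_, ?_⟩, ?_⟩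
  · rw [disjoint_filter]
    exact fun v _ hXv hYv ↦ G.irrefl ((hadj v v).2 ⟨_, hXv, hYv⟩)
  · simp only [mem_filter_univ]
    exact fun i a ha b hb ↦ (hadj a b).2 ⟨_, ha, hb⟩
  · intro u v huv
    obtain ⟨i, hiX, hiY⟩ := (hadj u v).1 huv
    have hiS : i ∈ S := mem_biUnion.2 ⟨u, mem_univ u, hiX⟩
    exact ⟨e.symm ⟨i, hiS⟩, by simp [hiX, hiY]⟩
  · intro v
    have hle : #{i | ↑(e i) ∈ X v ∨ ↑(e i) ∈ Y v} ≤ #(X v ∪ Y v) :=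
      card_le_card_of_injOn (fun i ↦ ↑(e i)) (fun i hi ↦ by simpa using hi)
        (Subtype.val_injective.comp e.injective).injOn
    simpa only [mem_filter_univ] using
      hle.trans ((card_union_le _ _).trans (add_le_add (hX v) (hY v)))

end HasRectangleCover

theorem coverSize_eq_sum_card_filter {V : Type*} [Fintype V] [DecidableEq V] {m : ℕ}
    {A B : Fin m → Finset V} (h : ∀ i, Disjoint (A i) (B i)) :
    coverSize A B = ∑ v, #{i | v ∈ A i ∨ v ∈ B i} := by
  calc coverSize A B = ∑ i, #{v | v ∈ A i ∨ v ∈ B i} := by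
        refine sum_congr rfl fun i _ ↦ ?_
        rw [← card_union_of_disjoint (h i)]
        congr 1
        ext v
        simp
    _ = ∑ v, #{i | v ∈ A i ∨ v ∈ B i} :=
        sum_card_bipartiteAbove_eq_sum_card_bipartiteBelow fun i v ↦ v ∈ A i ∨ v ∈ B i

/-- The dyadic blocks of level `k` at either end of the integer interval `[a, b)`. The number `q`
stands for the block `[q 2 ^ k, (q + 1) 2 ^ k)`, so that the blocks of level `k` contained in
`[a, b)` are those in `Ico (a ⌈/⌉ 2 ^ k) (b / 2 ^ k)`; of these, only the first and the last are
kept. -/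
def dyadicEnds (a b k : ℕ) : Finset ℕ :=
  {q ∈ Ico (a ⌈/⌉ 2 ^ k) (b / 2 ^ k) | q = a ⌈/⌉ 2 ^ k ∨ q + 1 = b / 2 ^ k}

theorem card_dyadicEnds_le_two (a b k : ℕ) : #(dyadicEnds a b k) ≤ 2 := by
  refine (card_le_card fun q hq ↦ ?_).trans (card_le_two (a := a ⌈/⌉ 2 ^ k) (b := b / 2 ^ k - 1))
  rw [dyadicEnds, mem_filter] at hq
  rw [mem_insert, mem_singleton]
  omega

theorem dyadicEnds_succ (a b k : ℕ) : dyadicEnds a b (k + 1) = dyadicEnds (a ⌈/⌉ 2) (b / 2) k := by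
  have hceil : a ⌈/⌉ 2 ^ (k + 1) = a ⌈/⌉ 2 ⌈/⌉ 2 ^ k := eq_of_forall_ge_iff fun c ↦ by
    rw [ceilDiv_le_iff_le_mul (by positivity), ceilDiv_le_iff_le_mul (by positivity),
      ceilDiv_le_iff_le_mul two_pos, pow_succ', mul_assoc]
  have hfloor : b / 2 ^ (k + 1) = b / 2 / 2 ^ k := by rw [pow_succ', Nat.div_div_eq_div_mul]
  rw [dyadicEnds, dyadicEnds, hceil, hfloor]

/-- Induction on the number of levels: an integer of `[a, b)` that is not an endpoint lies in a
block of level `1` contained in `[a, b)`, and halving turns these blocks into integers. -/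
theorem mem_Ico_iff_exists_div_mem_dyadicEnds {K a b p : ℕ} (hb : b < 2 ^ K) :
    p ∈ Ico a b ↔ ∃ k < K, p / 2 ^ k ∈ dyadicEnds a b k := by
  induction K generalizing a b p with
  | zero => simp_all
  | succ K ih =>
    have hlevel_zero : p / 2 ^ 0 ∈ dyadicEnds a b 0 ↔ p ∈ Ico a b ∧ (p = a ∨ p + 1 = b) := by
      simp [dyadicEnds]
    have hlevel_succ (k : ℕ) : p / 2 ^ (k + 1) ∈ dyadicEnds a b (k + 1) ↔
        p / 2 / 2 ^ k ∈ dyadicEnds (a ⌈/⌉ 2) (b / 2) k := by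
      rw [dyadicEnds_succ, pow_succ', Nat.div_div_eq_div_mul]
    have hb_half : b / 2 < 2 ^ K := by rw [pow_succ] at hb; omega
    calc p ∈ Ico a b
        ↔ p ∈ Ico a b ∧ (p = a ∨ p + 1 = b) ∨ p / 2 ∈ Ico (a ⌈/⌉ 2) (b / 2) := by
          simp only [mem_Ico, Nat.ceilDiv_eq_add_pred_div]
          omega
      _ ↔ ∃ k < K + 1, p / 2 ^ k ∈ dyadicEnds a b k := by
          simp only [Nat.exists_lt_succ_left, hlevel_zero, hlevel_succ, ih hb_half]

theorem hasRectangleCover_mem_Ico {V W : Type*} {K : ℕ} (p : V → ℕ) (a : W → ℕ) {b : W → ℕ}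
    (hb : ∀ w, b w < 2 ^ K) :
    HasRectangleCover.{0} (fun v w ↦ p v ∈ Ico (a w) (b w)) K (2 * K) := by
  refine ⟨Σ _ : ℕ, ℕ, fun v ↦ (range K).sigma fun k ↦ {p v / 2 ^ k},
    fun w ↦ (range K).sigma (dyadicEnds (a w) (b w)), fun v w ↦ ?_, fun v ↦ ?_, fun w ↦ ?_⟩
  · simp only [mem_Ico_iff_exists_div_mem_dyadicEnds (hb w), Sigma.exists, mem_sigma, mem_range,
      mem_singleton]
    grind
  · simp
  · rw [card_sigma, mul_comm]
    simpa using sum_le_card_nsmul (range K) _ 2 fun k _ ↦ card_dyadicEnds_le_two (a w) (b w) k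

/-- The intersection graph of a family of sets, two distinct indices being adjacent when their sets
meet. -/
def intersectionGraph {V α : Type*} (s : V → Set α) : SimpleGraph V where
  Adj u v := u ≠ v ∧ (s u ∩ s v).Nonempty
  symm := ⟨fun u v ⟨hne, hmeet⟩ ↦ ⟨hne.symm, Set.inter_comm (s u) (s v) ▸ hmeet⟩⟩
  loopless := ⟨fun _ h ↦ h.1 rfl⟩

theorem intersectionGraph_univ_pi {V J : Type*} {α : J → Type*} (s : V → ∀ j, Set (α j)) :
    intersectionGraph (fun v ↦ Set.univ.pi (s v)) = ⨅ j, intersectionGraph (s · j) := by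
  ext u v
  simp only [intersectionGraph, ← Set.pi_inter_distrib, Set.univ_pi_nonempty_iff,
    SimpleGraph.iInf_adj]
  grind

theorem exists_equiv_fin_monotone {V α : Type*} [Fintype V] [LinearOrder α] (f : V → α) :
    ∃ e : V ≃ Fin (Fintype.card V), Monotone (f ∘ e.symm) := by
  let e := Fintype.equivFin V
  exact ⟨e.trans (Tuple.sort (f ∘ e.symm)).symm, Tuple.monotone_sort (f ∘ e.symm)⟩

theorem intersectionGraph_Icc_adj_eq_symmGen {V α β : Type*} [Preorder α] [LinearOrder β]
    {lo hi : V → α} (h : ∀ v, lo v ≤ hi v) {rank : V → β} (hrank : Function.Injective rank)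
    (hlo : ∀ u v, rank u < rank v → lo u ≤ lo v) :
    (intersectionGraph fun v ↦ Set.Icc (lo v) (hi v)).Adj =
      Relation.SymmGen fun u v ↦ rank v < rank u ∧ lo u ≤ hi v := by
  ext u v
  constructor
  · rintro ⟨hne, x, ⟨hux, hxu⟩, hvx, hxv⟩
    rcases lt_or_gt_of_ne (hrank.ne hne) with huv | hvu
    · exact .inr ⟨huv, hvx.trans hxu⟩
    · exact .inl ⟨hvu, hux.trans hxv⟩
  · rintro (⟨hvu, hmeet⟩ | ⟨huv, hmeet⟩)
    · exact ⟨ne_of_apply_ne rank hvu.ne', lo u, ⟨le_rfl, h u⟩, hlo v u hvu, hmeet⟩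
    · exact ⟨ne_of_apply_ne rank huv.ne, lo v, ⟨hlo u v huv, hmeet⟩, le_rfl, h v⟩

theorem hasRectangleCover_intersectionGraph_Icc {V α : Type*} [Fintype V] [LinearOrder α]
    {lo hi : V → α} (h : ∀ v, lo v ≤ hi v) {K : ℕ} (hK : Fintype.card V < 2 ^ K) :
    HasRectangleCover.{0} (intersectionGraph fun v ↦ Set.Icc (lo v) (hi v)).Adj
      (3 * K) (3 * K) := by
  obtain ⟨rank, hmono⟩ := exists_equiv_fin_monotone lo
  have hlo (u v : V) (huv : rank u < rank v) : lo u ≤ lo v := by simpa using hmono huv.le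
  let leftCount (v : V) : ℕ := #{i | (lo ∘ rank.symm) i ≤ hi v}
  have lt_leftCount (u v : V) : rank u < leftCount v ↔ lo u ≤ hi v := by
    simpa [leftCount] using
      Tuple.lt_card_le_iff_apply_le_of_monotone hmono (j := rank u) (a := hi v)
  have leftCount_lt (v : V) : leftCount v < 2 ^ K := (card_le_univ _).trans_lt (by simpa using hK)
  rw [intersectionGraph_Icc_adj_eq_symmGen h rank.injective hlo, show 3 * K = K + 2 * K by ring]
  simpa only [mem_Ico, Order.add_one_le_iff, Fin.val_fin_lt, lt_leftCount] using
    (hasRectangleCover_mem_Ico (fun v ↦ (rank v : ℕ)) (fun v ↦ rank v + 1) leftCount_lt).symmGen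

theorem hasRectangleCover_intersectionGraph_Icc_pi.{w} {V : Type*} {J : Type w} [Fintype V]
    [Fintype J] [Nonempty J] {α : J → Type*} [∀ j, LinearOrder (α j)] {lo hi : V → ∀ j, α j}
    (h : ∀ v, lo v ≤ hi v) {K : ℕ} (hK : Fintype.card V < 2 ^ K) :
    HasRectangleCover.{w} (intersectionGraph fun v ↦ Set.Icc (lo v) (hi v)).Adj
      ((3 * K) ^ Fintype.card J) ((3 * K) ^ Fintype.card J) := by
  have hcover := HasRectangleCover.forall_pi fun j ↦
    hasRectangleCover_intersectionGraph_Icc (fun v ↦ h v j) hK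
  convert hcover with u v
  simp only [← Set.pi_univ_Icc, intersectionGraph_univ_pi, SimpleGraph.iInf_adj_of_nonempty]

theorem natLog_two_add_one_le_two_mul_logb {n : ℕ} (hn : 2 ≤ n) :
    (Nat.log 2 n + 1 : ℝ) ≤ 2 * Real.logb 2 n := by
  have hlog : (Nat.log 2 n : ℝ) ≤ Real.logb 2 n := mod_cast Real.natLog_le_logb n 2
  have hone : (1 : ℝ) ≤ Nat.log 2 n := mod_cast Nat.log_pos one_lt_two hn
  linarith

theorem stmt_14_general {V J : Type*} [Fintype V] [DecidableEq V] [Fintype J] [Nonempty J]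
    {α : J → Type*} [∀ j, LinearOrder (α j)] (hV : 2 ≤ Fintype.card V) {lo hi : V → ∀ j, α j}
    (h : ∀ v, lo v ≤ hi v) :
    ∃ (m : ℕ) (A B : Fin m → Finset V),
      IsBicliqueCover (intersectionGraph fun v ↦ Set.Icc (lo v) (hi v)) A B ∧
      (coverSize A B : ℝ) ≤ 2 * 6 ^ Fintype.card J * Fintype.card V *
        Real.logb 2 (Fintype.card V) ^ Fintype.card J ∧
      ∀ v, (#{i | v ∈ A i ∨ v ∈ B i} : ℝ) ≤
        2 * 6 ^ Fintype.card J * Real.logb 2 (Fintype.card V) ^ Fintype.card J := by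
  set n := Fintype.card V
  set d := Fintype.card J
  obtain ⟨m, A, B, hcover, hdegree⟩ := (hasRectangleCover_intersectionGraph_Icc_pi h
    (Nat.lt_pow_succ_log_self one_lt_two n)).exists_isBicliqueCover
  have hdegree_real (v : V) :
      (#{i | v ∈ A i ∨ v ∈ B i} : ℝ) ≤ 2 * 6 ^ d * Real.logb 2 n ^ d := by
    calc (#{i | v ∈ A i ∨ v ∈ B i} : ℝ)
        ≤ 2 * (3 * (Nat.log 2 n + 1)) ^ d := by
          refine (Nat.cast_le.2 (hdegree v)).trans_eq ?_
          push_cast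
          ring
      _ ≤ 2 * (3 * (2 * Real.logb 2 n)) ^ d := by
          gcongr
          exact natLog_two_add_one_le_two_mul_logb hV
      _ = 2 * 6 ^ d * Real.logb 2 n ^ d := by rw [← mul_assoc, mul_pow]; ring
  refine ⟨m, A, B, hcover, ?_, hdegree_real⟩
  rw [coverSize_eq_sum_card_filter hcover.1, Nat.cast_sum]
  calc ∑ v, (#{i | v ∈ A i ∨ v ∈ B i} : ℝ)
      ≤ n • (2 * 6 ^ d * Real.logb 2 n ^ d) := sum_le_card_nsmul _ _ _ fun v _ ↦ hdegree_real v
    _ = 2 * 6 ^ d * n * Real.logb 2 n ^ d := by rw [nsmul_eq_mul]; ring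

/-- Intersection graphs of axis-aligned boxes in `ℝ^d` admit biclique covers of
size `O(n (log₂ n)^d)` in which every vertex appears in `O((log₂ n)^d)`
bicliques. -/
theorem stmt_14 (d : ℕ) (hd : 1 ≤ d) :
    ∃ C : ℝ, 0 < C ∧ ∀ n : ℕ, 2 ≤ n →
      ∀ (lo hi : Fin n → Fin d → ℝ), (∀ v, lo v ≤ hi v) →
      ∀ G : SimpleGraph (Fin n),
      (∀ u v, G.Adj u v ↔ u ≠ v ∧
        (Set.Icc (lo u) (hi u) ∩ Set.Icc (lo v) (hi v)).Nonempty) →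
      ∃ (m : ℕ) (A B : Fin m → Finset (Fin n)),
        IsBicliqueCover G A B ∧
        (coverSize A B : ℝ) ≤ C * (n : ℝ) * (Real.logb 2 n) ^ d ∧
        ∀ v : Fin n,
          (((Finset.univ : Finset (Fin m)).filter
              (fun i => v ∈ A i ∨ v ∈ B i)).card : ℝ) ≤ C * (Real.logb 2 n) ^ d := by
  have : Nonempty (Fin d) := ⟨⟨0, hd⟩⟩
  refine ⟨2 * 6 ^ d, by positivity, fun n hn lo hi h G hG ↦ ?_⟩
  obtain rfl : G = intersectionGraph fun v ↦ Set.Icc (lo v) (hi v) := by ext u v; exact hG u v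
  simpa using stmt_14_general (by simpa using hn) h
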